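/- Let f = h·conj(g) be a nonvanishing sense-preserving logharmonic mapping on the unit disk with dilatation ω, and fix z₀ ∈ 𝔻. Define a = (1 + ω(z₀))/(1 − |ω(z₀)|²) and b = −conj(ω(z₀))·(1 + ω(z₀))/(1 − |ω(z₀)|²). Then the analytic function φ = h^a · g^b (defined via branches of log h and log g) satisfies Pφ(z₀) = P_f(z₀), i.e. (φ''/φ')(z₀) = P_f(z₀). -/

import Mathlib

open Complex

/-- Second dilatation ω = g'h/(g h') of the logharmonic mapping h·conj g. -/
noncomputable def omegaOf (h g : ℂ → ℂ) (z : ℂ) : ℂ :=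
  deriv g z * h z / (g z * deriv h z)

/-- Pre-Schwarzian derivative of the logharmonic mapping h·conj g. -/
noncomputable def preSch (h g : ℂ → ℂ) (z : ℂ) : ℂ :=
  deriv (deriv h) z / deriv h z + omegaOf h g z * deriv h z / h z -
    deriv (omegaOf h g) z * (starRingEnd ℂ) (omegaOf h g z) /
      (1 - (‖omegaOf h g z‖ : ℂ) ^ 2)

/-!
Near `z₀` the dilatation relates the logarithmic derivatives of the two factors, `g'/g = ω h'/h`,
so `φ = h^a g^b` satisfies `φ'/φ = (a + b ω) h'/h`. Differentiating logarithmically once more,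
`φ''/φ' = h''/h' + (a + b ω - 1) h'/h + b ω' / (a + b ω)`.
The constants `a` and `b` are the solution of `a + b ω(z₀) = 1 + ω(z₀)`, `b / a = -conj ω(z₀)`,
and for them the right-hand side at `z₀` is the pre-Schwarzian derivative of `h · conj g`.
-/

open Filter Topology

theorem logDeriv_deriv_of_logDeriv_eventuallyEq {𝕜 𝕜' : Type*} [NontriviallyNormedField 𝕜]
    [NontriviallyNormedField 𝕜'] [NormedAlgebra 𝕜 𝕜']
    {φ h c : 𝕜 → 𝕜'} {z : 𝕜} (hφ : DifferentiableAt 𝕜 φ z) (hφ0 : φ z ≠ 0)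
    (hh : DifferentiableAt 𝕜 h z) (hh0 : h z ≠ 0)
    (hdh : DifferentiableAt 𝕜 (deriv h) z) (hdh0 : deriv h z ≠ 0)
    (hc : DifferentiableAt 𝕜 c z) (hc0 : c z ≠ 0)
    (heq : logDeriv φ =ᶠ[𝓝 z] fun x ↦ c x * logDeriv h x) :
    logDeriv (deriv φ) z =
      logDeriv (deriv h) z + (c z - 1) * logDeriv h z + logDeriv c z := by
  have hderiv : deriv φ =ᶠ[𝓝 z] fun x ↦ φ x * (c x * (deriv h x / h x)) := by
    filter_upwards [heq, hφ.continuousAt.eventually_ne hφ0] with x hx hx0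
    rw [← logDeriv_apply h, ← hx, logDeriv_apply, mul_div_cancel₀ _ hx0]
  have hquot : DifferentiableAt 𝕜 (fun x ↦ deriv h x / h x) z := hdh.fun_div hh hh0
  have hquot0 : deriv h z / h z ≠ 0 := div_ne_zero hdh0 hh0
  calc logDeriv (deriv φ) z
      = logDeriv (fun x ↦ φ x * (c x * (deriv h x / h x))) z :=
        (logDeriv_congr_nhds hderiv).eq_of_nhds
    _ = logDeriv φ z + (logDeriv c z + (logDeriv (deriv h) z - logDeriv h z)) := by
        rw [logDeriv_mul (g := fun x ↦ c x * (deriv h x / h x)) z hφ0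
            (mul_ne_zero hc0 hquot0) hφ (hc.fun_mul hquot),
          logDeriv_mul (g := fun x ↦ deriv h x / h x) z hc0 hquot0 hc hquot,
          logDeriv_div z hdh0 hh0 hdh hh]
    _ = logDeriv (deriv h) z + (c z - 1) * logDeriv h z + logDeriv c z := by
        rw [heq.eq_of_nhds]
        ring

theorem logDeriv_eq_deriv_of_eventuallyEq_cexp {f L : ℂ → ℂ} {z : ℂ}
    (hL : DifferentiableAt ℂ L z) (hf : f =ᶠ[𝓝 z] fun x ↦ exp (L x)) :
    logDeriv f z = deriv L z := by
  rw [(logDeriv_congr_nhds hf).eq_of_nhds, logDeriv_apply, deriv_cexp hL,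
    mul_div_cancel_left₀ _ (exp_ne_zero _)]

theorem one_add_ne_zero_of_norm_ne_one {w : ℂ} (hw : ‖w‖ ≠ 1) : 1 + w ≠ 0 := by
  intro h
  apply hw
  rw [eq_neg_of_add_eq_zero_right h, norm_neg, norm_one]

theorem one_sub_norm_sq_ne_zero {w : ℂ} (hw : ‖w‖ ≠ 1) : 1 - (‖w‖ : ℂ) ^ 2 ≠ 0 := by
  have h : ‖w‖ ^ 2 ≠ 1 := mt (pow_eq_one_iff_of_nonneg (norm_nonneg w) two_ne_zero).1 hw
  exact sub_ne_zero.2 (mod_cast h.symm)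

theorem add_neg_conj_mul_mul_eq_one_add {w a : ℂ} (hw : ‖w‖ ≠ 1)
    (ha : a = (1 + w) / (1 - (‖w‖ : ℂ) ^ 2)) :
    a + -(starRingEnd ℂ) w * a * w = 1 + w := by
  calc a + -(starRingEnd ℂ) w * a * w = a * (1 - (starRingEnd ℂ) w * w) := by ring
    _ = 1 + w := by rw [conj_mul', ha, div_mul_cancel₀ _ (one_sub_norm_sq_ne_zero hw)]

section Dilatation

variable {h g : ℂ → ℂ} {z : ℂ}

theorem logDeriv_eq_omegaOf_mul_logDeriv (hh0 : h z ≠ 0) (hdh0 : deriv h z ≠ 0) :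
    logDeriv g z = omegaOf h g z * logDeriv h z := by
  simp only [logDeriv_apply, omegaOf]
  field_simp

theorem analyticAt_omegaOf (hh : AnalyticAt ℂ h z) (hg : AnalyticAt ℂ g z)
    (hg0 : g z ≠ 0) (hdh0 : deriv h z ≠ 0) : AnalyticAt ℂ (omegaOf h g) z :=
  (hg.deriv.mul hh).div (hg.mul hh.deriv) (mul_ne_zero hg0 hdh0)

theorem preSch_eq_logDeriv (h g : ℂ → ℂ) (z : ℂ) :
    preSch h g z = logDeriv (deriv h) z + omegaOf h g z * logDeriv h z -
      deriv (omegaOf h g) z * (starRingEnd ℂ) (omegaOf h g z) /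
        (1 - (‖omegaOf h g z‖ : ℂ) ^ 2) := by
  simp only [preSch, logDeriv_apply, mul_div_assoc]

end Dilatation

section PowerProduct

variable {h g Lh Lg φ : ℂ → ℂ} {z₀ a b : ℂ}

theorem logDeriv_eventuallyEq_of_power_product
    (hLh : AnalyticAt ℂ Lh z₀) (hLg : AnalyticAt ℂ Lg z₀)
    (hh : h =ᶠ[𝓝 z₀] fun z ↦ exp (Lh z)) (hg : g =ᶠ[𝓝 z₀] fun z ↦ exp (Lg z))
    (hφ : φ =ᶠ[𝓝 z₀] fun z ↦ exp (a * Lh z + b * Lg z)) :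
    logDeriv φ =ᶠ[𝓝 z₀] fun z ↦ a * logDeriv h z + b * logDeriv g z := by
  filter_upwards [hLh.eventually_analyticAt, hLg.eventually_analyticAt, hh.eventually_nhds,
    hg.eventually_nhds, hφ.eventually_nhds] with z hLhz hLgz hhz hgz hφz
  have hdLh := hLhz.differentiableAt
  have hdLg := hLgz.differentiableAt
  rw [logDeriv_eq_deriv_of_eventuallyEq_cexp hdLh hhz,
    logDeriv_eq_deriv_of_eventuallyEq_cexp hdLg hgz,
    logDeriv_eq_deriv_of_eventuallyEq_cexp ((hdLh.const_mul a).fun_add (hdLg.const_mul b)) hφz,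
    deriv_fun_add (hdLh.const_mul a) (hdLg.const_mul b), deriv_const_mul a hdLh,
    deriv_const_mul b hdLg]

theorem logDeriv_deriv_of_power_product
    (hLh : AnalyticAt ℂ Lh z₀) (hLg : AnalyticAt ℂ Lg z₀)
    (hh : h =ᶠ[𝓝 z₀] fun z ↦ exp (Lh z)) (hg : g =ᶠ[𝓝 z₀] fun z ↦ exp (Lg z))
    (hdh0 : deriv h z₀ ≠ 0) (hφ : φ =ᶠ[𝓝 z₀] fun z ↦ exp (a * Lh z + b * Lg z))
    (hab : a + b * omegaOf h g z₀ ≠ 0) :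
    logDeriv (deriv φ) z₀ =
      logDeriv (deriv h) z₀ + (a + b * omegaOf h g z₀ - 1) * logDeriv h z₀ +
        b * deriv (omegaOf h g) z₀ / (a + b * omegaOf h g z₀) := by
  have hha : AnalyticAt ℂ h z₀ := hLh.cexp.congr hh.symm
  have hga : AnalyticAt ℂ g z₀ := hLg.cexp.congr hg.symm
  have hφd : DifferentiableAt ℂ φ z₀ :=
    ((analyticAt_const.mul hLh).add (analyticAt_const.mul hLg)).cexp.congr hφ.symm
      |>.differentiableAt
  have hh0 : h z₀ ≠ 0 := hh.eq_of_nhds ▸ exp_ne_zero _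
  have hg0 : g z₀ ≠ 0 := hg.eq_of_nhds ▸ exp_ne_zero _
  have hφ0 : φ z₀ ≠ 0 := hφ.eq_of_nhds ▸ exp_ne_zero _
  have hω : DifferentiableAt ℂ (omegaOf h g) z₀ :=
    (analyticAt_omegaOf hha hga hg0 hdh0).differentiableAt
  have hlog : logDeriv φ =ᶠ[𝓝 z₀] fun z ↦ (a + b * omegaOf h g z) * logDeriv h z := by
    filter_upwards [logDeriv_eventuallyEq_of_power_product hLh hLg hh hg hφ,
      hha.continuousAt.eventually_ne hh0, hha.deriv.continuousAt.eventually_ne hdh0]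
      with z hz hhz hdhz
    rw [hz, logDeriv_eq_omegaOf_mul_logDeriv (g := g) hhz hdhz]
    ring
  rw [logDeriv_deriv_of_logDeriv_eventuallyEq hφd hφ0 hha.differentiableAt hh0
      hha.deriv.differentiableAt hdh0 ((hω.const_mul b).const_add a) hab hlog,
    logDeriv_apply (fun z ↦ a + b * omegaOf h g z), deriv_const_add, deriv_const_mul b hω]

theorem preSch_eq_preSch_of_power_product_general
    (hLh : AnalyticAt ℂ Lh z₀) (hLg : AnalyticAt ℂ Lg z₀)
    (hh : h =ᶠ[𝓝 z₀] fun z ↦ exp (Lh z)) (hg : g =ᶠ[𝓝 z₀] fun z ↦ exp (Lg z))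
    (hdh0 : deriv h z₀ ≠ 0) (hω : ‖omegaOf h g z₀‖ ≠ 1)
    (ha : a = (1 + omegaOf h g z₀) / (1 - (‖omegaOf h g z₀‖ : ℂ) ^ 2))
    (hb : b = -(starRingEnd ℂ) (omegaOf h g z₀) * a)
    (hφ : φ =ᶠ[𝓝 z₀] fun z ↦ exp (a * Lh z + b * Lg z)) :
    deriv (deriv φ) z₀ / deriv φ z₀ = preSch h g z₀ := by
  have hne : 1 + omegaOf h g z₀ ≠ 0 := one_add_ne_zero_of_norm_ne_one hω
  have hab : a + b * omegaOf h g z₀ = 1 + omegaOf h g z₀ := by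
    rw [hb, add_neg_conj_mul_mul_eq_one_add hω ha]
  have hratio : b / (1 + omegaOf h g z₀) =
      -(starRingEnd ℂ) (omegaOf h g z₀) / (1 - (‖omegaOf h g z₀‖ : ℂ) ^ 2) := by
    rw [hb, ha]
    field_simp
  rw [← logDeriv_apply, logDeriv_deriv_of_power_product hLh hLg hh hg hdh0 hφ (hab ▸ hne),
    preSch_eq_logDeriv, hab, mul_div_right_comm, hratio]
  ring

end PowerProduct

theorem preSch_eq_preSch_of_power_product
    (h g : ℂ → ℂ)
    (hh : DifferentiableOn ℂ h (Metric.ball (0 : ℂ) 1))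
    (hg : DifferentiableOn ℂ g (Metric.ball (0 : ℂ) 1))
    (hh0 : ∀ z ∈ Metric.ball (0 : ℂ) 1, h z ≠ 0)
    (hg0 : ∀ z ∈ Metric.ball (0 : ℂ) 1, g z ≠ 0)
    (hh' : ∀ z ∈ Metric.ball (0 : ℂ) 1, deriv h z ≠ 0)
    (hω : ∀ z ∈ Metric.ball (0 : ℂ) 1, ‖omegaOf h g z‖ < 1)
    (Lh Lg : ℂ → ℂ)
    (hLh : DifferentiableOn ℂ Lh (Metric.ball (0 : ℂ) 1))
    (hLg : DifferentiableOn ℂ Lg (Metric.ball (0 : ℂ) 1))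
    (hLhlog : ∀ z ∈ Metric.ball (0 : ℂ) 1, Complex.exp (Lh z) = h z)
    (hLglog : ∀ z ∈ Metric.ball (0 : ℂ) 1, Complex.exp (Lg z) = g z)
    (z₀ : ℂ) (hz₀ : z₀ ∈ Metric.ball (0 : ℂ) 1)
    (a b : ℂ)
    (ha : a = (1 + omegaOf h g z₀) / (1 - (‖omegaOf h g z₀‖ : ℂ) ^ 2))
    (hb : b = -(starRingEnd ℂ) (omegaOf h g z₀) *
      ((1 + omegaOf h g z₀) / (1 - (‖omegaOf h g z₀‖ : ℂ) ^ 2)))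
    (φ : ℂ → ℂ)
    (hφ : ∀ z ∈ Metric.ball (0 : ℂ) 1, φ z = Complex.exp (a * Lh z + b * Lg z)) :
    deriv (deriv φ) z₀ / deriv φ z₀ = preSch h g z₀ := by
  have hball : Metric.ball (0 : ℂ) 1 ∈ 𝓝 z₀ := Metric.isOpen_ball.mem_nhds hz₀
  exact preSch_eq_preSch_of_power_product_general (hLh.analyticAt hball) (hLg.analyticAt hball)
    (eventually_of_mem hball fun z hz ↦ (hLhlog z hz).symm)
    (eventually_of_mem hball fun z hz ↦ (hLglog z hz).symm)
    (hh' z₀ hz₀) (hω z₀ hz₀).ne ha (ha ▸ hb) (eventually_of_mem hball hφ)
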